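/- The multiple chessboard complex Δ_{2,4}^{1;L} (rook placements on a 2×4 board with at most one rook per row, at most one rook in column 2, and at most two rooks in column 1) is a triangulation of the 2-sphere; in particular it is a closed 2-manifold and is simply connected. -/

import Mathlib

open scoped Classical

/-- The multiple chessboard complex `Δ_{2,4}^{𝟙;𝕃}`: a set of cells of the `2 × 4`
board (first coordinate = column, second coordinate = row) is a simplex iff each of
the four rows contains at most one cell, column `1` contains at most one cell, and
column `0` contains at most two cells. -/
def IsChessSimplex (S : Finset (Fin 2 × Fin 4)) : Prop :=
  (∀ j : Fin 4, (S.filter fun c => c.2 = j).card ≤ 1) ∧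
  (S.filter fun c => c.1 = 1).card ≤ 1 ∧
  (S.filter fun c => c.1 = 0).card ≤ 2

/-- The geometric realization of `Δ_{2,4}^{𝟙;𝕃}` inside the standard simplex on the
vertex set `[2] × [4]`: the points whose support is a simplex of the complex. -/
def chessRealization : Set ((Fin 2 × Fin 4) → ℝ) :=
  {x ∈ stdSimplex ℝ (Fin 2 × Fin 4) |
    IsChessSimplex (Finset.univ.filter fun v => x v ≠ 0)}

/-!
The two columns of a simplex are disjoint sets of rows, of size at most `2` and at most `1`. Since
`2 + 1 + 1 = 4`, the second condition is Alexander dual to the first, so the complex is the Bier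
complex of the `1`-skeleton `K` of the tetrahedron.

For every complex `K` other than the void complex and the full simplex, the Bier complex spans a
complete fan in `ℝ^ι / ℝ·1`: send `(0, i)` to `eᵢ` and `(1, i)` to `-eᵢ`. A point of a cone is then
a vector `t` (its positive and negative parts) with `{t > 0} ∈ K` and `{t ≥ 0} ∉ K`, and every
`t` has exactly one translate `t - c` with this property, because the superlevel sets of `t`
shrink from `univ ∉ K` to `∅ ∈ K` and hence leave the non-faces at exactly one level `c`. Radial
projection of the fan identifies the realization with a sphere.

For the simple connectivity of spheres, a loop in `E \ {0}` is homotopic to a polynomial loop. If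
`dim E > 2`, the cone over the latter is a smooth image of `ℝ²`, so it misses a ray; the complement
of that ray is star-shaped.
-/

open Set
open Module (finrank)
open Function (Injective Surjective support)
open scoped unitInterval ContDiff ContinuousMap

section SimplyConnected

theorem homotopic_of_forall_mem_isSimplyConnected {X : Type*} [TopologicalSpace X] {s t : Set X}
    (hs : IsSimplyConnected s) (hst : s ⊆ t) {x y : t} (p q : Path x y)
    (hp : ∀ τ, (p τ : X) ∈ s) (hq : ∀ τ, (q τ : X) ∈ s) : p.Homotopic q := by
  have hx : (x : X) ∈ s := by simpa using hp 0
  have hy : (y : X) ∈ s := by simpa using hp 1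
  let restrict (r : Path x y) (hr : ∀ τ, (r τ : X) ∈ s) : Path (⟨x, hx⟩ : s) ⟨y, hy⟩ :=
    { toFun := fun τ => ⟨r τ, hr τ⟩
      source' := by simp
      target' := by simp }
  have := hs.simplyConnectedSpace
  exact (SimplyConnectedSpace.paths_homotopic (restrict p hp) (restrict q hq)).map
    ⟨inclusion hst, continuous_inclusion hst⟩

theorem homotopic_of_segment_subset {E : Type*} [AddCommGroup E] [Module ℝ E] [TopologicalSpace E]
    [ContinuousAdd E] [ContinuousSMul ℝ E] {s : Set E} {x y : s} (p q : Path x y)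
    (h : ∀ τ, segment ℝ (p τ : E) (q τ) ⊆ s) : p.Homotopic q :=
  ⟨{ toFun := fun z => ⟨AffineMap.lineMap (p z.2 : E) (q z.2) (z.1 : ℝ),
        h z.2 (segment_eq_image_lineMap ℝ (p z.2 : E) (q z.2) ▸ mem_image_of_mem _ z.1.2)⟩
     continuous_toFun := by
       simp only [AffineMap.lineMap_apply_module]
       fun_prop
     map_zero_left := fun τ => by simp
     map_one_left := fun τ => by simp
     prop' := by rintro τ _ (rfl | rfl) <;> simp }⟩

variable {E : Type*} [NormedAddCommGroup E] [NormedSpace ℝ E]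

theorem exists_contDiff_eq_bernsteinApproximation (n : ℕ) (f : C(I, E)) :
    ∃ c : ℝ → E, ContDiff ℝ ω c ∧ ∀ τ : I, bernsteinApproximation n f τ = c τ := by
  refine ⟨fun τ => ∑ k : Fin (n + 1),
    ((n.choose k : ℝ) * τ ^ (k : ℕ) * (1 - τ) ^ (n - k : ℕ)) • f (bernstein.z k), ?_, fun τ => ?_⟩
  · fun_prop
  · simp [bernsteinApproximation.apply, bernstein_apply]

theorem exists_contDiff_path_homotopic {s : Set E} (hs : IsOpen s) {x y : s} (γ : Path x y) :
    ∃ δ : Path x y, γ.Homotopic δ ∧ ∃ c : ℝ → E, ContDiff ℝ ω c ∧ ∀ τ : I, (δ τ : E) = c τ := by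
  let f : C(I, E) := ⟨fun τ => γ τ, by fun_prop⟩
  obtain ⟨ε, hε, hεs⟩ : ∃ ε > 0, Metric.thickening ε (range f) ⊆ s :=
    (isCompact_range f.continuous).exists_thickening_subset_open hs
      (range_subset_iff.2 fun τ => (γ τ).2)
  obtain ⟨n, hn, hn0⟩ : ∃ n, dist (bernsteinApproximation n f) f < ε ∧ n ≠ 0 :=
    ((Metric.tendsto_nhds.1 (bernsteinApproximation_uniform f) ε hε).and
      (Filter.eventually_ne_atTop 0)).exists
  have hclose (τ : I) : bernsteinApproximation n f τ ∈ Metric.ball (f τ) ε :=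
    (ContinuousMap.dist_apply_le_dist τ).trans_lt hn
  have hball (τ : I) : Metric.ball (f τ) ε ⊆ s :=
    (Metric.ball_subset_thickening (mem_range_self τ) ε).trans hεs
  let δ : Path x y :=
    { toFun := fun τ => ⟨bernsteinApproximation n f τ, hball τ (hclose τ)⟩
      source' := by simp [f]
      target' := by simp [f, bernsteinApproximation.apply_one hn0] }
  exact ⟨δ, homotopic_of_segment_subset γ δ fun τ =>
    ((convex_ball (f τ) ε).segment_subset (Metric.mem_ball_self hε) (hclose τ)).trans (hball τ),
    exists_contDiff_eq_bernsteinApproximation n f⟩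

theorem starConvex_setOf_not_sameRay {𝕜 V : Type*} [Field 𝕜] [LinearOrder 𝕜]
    [IsStrictOrderedRing 𝕜] [AddCommGroup V] [Module 𝕜 V] {v : V} (hv : v ≠ 0) :
    StarConvex 𝕜 (-v) {y | ¬SameRay 𝕜 v y} := by
  intro y hy a b ha hb hab hray
  rcases hb.eq_or_lt with rfl | hb
  · obtain rfl : a = 1 := by simpa using hab
    exact hv (eq_zero_of_sameRay_self_neg (R := 𝕜) (by simpa using hray))
  · have hby : SameRay 𝕜 v (b • y) := by
      simpa using (SameRay.sameRay_nonneg_smul_right v ha).add_right hray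
    exact hy (by simpa [smul_smul, hb.ne'] using hby.pos_smul_right (inv_pos.2 hb))

theorem isSimplyConnected_setOf_not_sameRay {v : E} (hv : v ≠ 0) :
    IsSimplyConnected {y | ¬SameRay ℝ v y} := by
  have := (starConvex_setOf_not_sameRay (𝕜 := ℝ) hv).contractibleSpace
    ⟨-v, fun h => hv (eq_zero_of_sameRay_self_neg h)⟩
  exact SimplyConnectedSpace.ofContractible _

theorem exists_ne_zero_forall_not_sameRay (hE : 2 < finrank ℝ E) {c : ℝ → E}
    (hc : ContDiff ℝ 1 c) : ∃ v ≠ 0, ∀ τ, c τ ≠ 0 → ¬SameRay ℝ v (c τ) := by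
  have : FiniteDimensional ℝ E := FiniteDimensional.of_finrank_pos (by lia)
  have hdense : Dense (range fun q : ℝ × ℝ => q.1 • c q.2)ᶜ :=
    ContDiff.dense_compl_range_of_finrank_lt_finrank (by fun_prop) (by simpa using hE)
  obtain ⟨v, hv⟩ := hdense.nonempty
  refine ⟨v, ?_, fun τ hτ hray => ?_⟩
  · rintro rfl
    exact hv ⟨(0, 0), by simp⟩
  · obtain ⟨r, -, hr⟩ := hray.exists_nonneg_right hτ
    exact hv ⟨(r, τ), hr.symm⟩

theorem isSimplyConnected_compl_zero (hE : 2 < finrank ℝ E) :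
    IsSimplyConnected ({0}ᶜ : Set E) := by
  refine simply_connected_iff_loops_nullhomotopic.2 ⟨?_, fun {x} γ => ?_⟩
  · exact isPathConnected_iff_pathConnectedSpace.1 <|
      isPathConnected_compl_singleton_of_one_lt_rank
        (Module.one_lt_rank_of_one_lt_finrank (by lia)) 0
  obtain ⟨δ, hγδ, c, hc, hδc⟩ := exists_contDiff_path_homotopic isOpen_compl_singleton γ
  obtain ⟨v, hv, hvc⟩ := exists_ne_zero_forall_not_sameRay hE (hc.of_le le_top)
  have hδ (τ : I) : ¬SameRay ℝ v (δ τ : E) := hδc τ ▸ hvc τ (hδc τ ▸ (δ τ).2)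
  refine hγδ.trans (homotopic_of_forall_mem_isSimplyConnected
    (isSimplyConnected_setOf_not_sameRay hv) ?_ δ (Path.refl x) hδ fun _ => ?_)
  · rintro _ hy rfl
    exact hy (SameRay.zero_right v)
  · simpa using hδ 0

theorem simplyConnectedSpace_sphere (hE : 2 < finrank ℝ E) :
    SimplyConnectedSpace (Metric.sphere (0 : E) 1) := by
  have := (isSimplyConnected_compl_zero hE).simplyConnectedSpace
  have := (convex_Ioi (0 : ℝ)).contractibleSpace nonempty_Ioi
  obtain ⟨hIoi⟩ := ContractibleSpace.hequiv_unit (Ioi (0 : ℝ))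
  let e : ({0}ᶜ : Set E) ≃ₕ Metric.sphere (0 : E) 1 :=
    (homeomorphUnitSphereProd E).toHomotopyEquiv.trans <|
      ((ContinuousMap.HomotopyEquiv.refl _).prodCongr hIoi).trans
        (Homeomorph.prodPUnit _).toHomotopyEquiv
  exact e.symm.simplyConnectedSpace

end SimplyConnected

section Fan

variable {κ : Type*}

/-- The union of the cones in `ℝ^κ` spanned by the faces of a simplicial complex `L` on `κ`. Here
and below a simplicial complex is a lower set of sets of vertices that need not contain every
vertex; its empty face is recorded, so that the complex `{∅}` differs from the void complex `⊥`,
as Alexander duality requires. -/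
def simplicialCone (L : LowerSet (Set κ)) : Set (κ → ℝ) :=
  {x | 0 ≤ x ∧ support x ∈ L}

/-- The geometric realization of a simplicial complex `L`, as the set of points of the standard
simplex on its vertex set that are supported on a face of `L`. -/
def geometricRealization [Fintype κ] (L : LowerSet (Set κ)) : Set (κ → ℝ) :=
  {x ∈ stdSimplex ℝ κ | support x ∈ L}

theorem smul_mem_simplicialCone {L : LowerSet (Set κ)} {x : κ → ℝ} (hx : x ∈ simplicialCone L)
    {r : ℝ} (hr : 0 ≤ r) : r • x ∈ simplicialCone L :=
  ⟨smul_nonneg hr hx.1, L.lower (Function.support_const_smul_subset r x) hx.2⟩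

theorem geometricRealization_subset_simplicialCone [Fintype κ] (L : LowerSet (Set κ)) :
    geometricRealization L ⊆ simplicialCone L :=
  fun _ hx => ⟨hx.1.1, hx.2⟩

theorem isClosed_setOf_support_mem [Finite κ] {R : Type*} [Zero R] [TopologicalSpace R] [T1Space R]
    (L : LowerSet (Set κ)) : IsClosed {x : κ → R | support x ∈ L} := by
  have hunion : {x : κ → R | support x ∈ L} = ⋃ s ∈ L, {x | support x ⊆ s} := by
    ext x
    simp only [mem_iUnion, exists_prop]
    exact ⟨fun hx => ⟨_, hx, Subset.rfl⟩, fun ⟨s, hs, hxs⟩ => L.lower hxs hs⟩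
  have hface (s : Set κ) : IsClosed {x : κ → R | support x ⊆ s} := by
    have : {x : κ → R | support x ⊆ s} = ⋂ i ∈ sᶜ, {x | x i = 0} := by
      ext x
      simp only [mem_iInter, mem_compl_iff]
      exact Function.support_subset_iff'
    exact this ▸ isClosed_biInter fun i _ => isClosed_singleton.preimage (continuous_apply i)
  exact hunion ▸ (toFinite (L : Set (Set κ))).isClosed_biUnion fun s _ => hface s

theorem isCompact_geometricRealization [Fintype κ] (L : LowerSet (Set κ)) :
    IsCompact (geometricRealization L) :=
  (isCompact_stdSimplex ℝ κ).inter_right (isClosed_setOf_support_mem L)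

theorem eq_of_mem_geometricRealization_of_eq_smul [Fintype κ] {L : LowerSet (Set κ)} {x y : κ → ℝ}
    (hx : x ∈ geometricRealization L) (hy : y ∈ geometricRealization L) {r : ℝ} (hxy : x = r • y) :
    x = y := by
  have hr : r = 1 := by
    simpa [hxy, ← Finset.mul_sum, hy.1.2] using hx.1.2
  rw [hxy, hr, one_smul]

theorem exists_pos_smul_mem_geometricRealization [Fintype κ] {L : LowerSet (Set κ)} {x : κ → ℝ}
    (hx : x ∈ simplicialCone L) (hx0 : x ≠ 0) : ∃ r > (0 : ℝ), r • x ∈ geometricRealization L := by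
  have hsum : 0 < ∑ v, x v := Fintype.sum_pos (hx.1.lt_of_ne' hx0)
  have hcone := smul_mem_simplicialCone hx (inv_nonneg.2 hsum.le)
  refine ⟨(∑ v, x v)⁻¹, inv_pos.2 hsum, ⟨hcone.1, ?_⟩, hcone.2⟩
  simp only [Pi.smul_apply, smul_eq_mul, ← Finset.mul_sum]
  exact inv_mul_cancel₀ hsum.ne'

variable {E : Type*} [NormedAddCommGroup E] [NormedSpace ℝ E]

theorem ne_zero_of_injOn_simplicialCone [Fintype κ] {L : LowerSet (Set κ)} {f : (κ → ℝ) →ₗ[ℝ] E}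
    (hf : InjOn f (simplicialCone L)) {x : κ → ℝ} (hx : x ∈ geometricRealization L) : f x ≠ 0 := by
  intro hfx
  have hcone := geometricRealization_subset_simplicialCone L hx
  have hx0 : x = (0 : ℝ) • x := hf hcone (smul_mem_simplicialCone hcone le_rfl) (by simp [hfx])
  have hsum := hx.1.2
  rw [hx0] at hsum
  simp at hsum

theorem nonempty_geometricRealization_homeomorph_sphere [Fintype κ] {L : LowerSet (Set κ)}
    (f : (κ → ℝ) →ₗ[ℝ] E) (hf : BijOn f (simplicialCone L) univ) :
    Nonempty (geometricRealization L ≃ₜ Metric.sphere (0 : E) 1) := by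
  have hcone := geometricRealization_subset_simplicialCone L
  have hne (x : geometricRealization L) : f x ≠ 0 := ne_zero_of_injOn_simplicialCone hf.injOn x.2
  let g (x : geometricRealization L) : Metric.sphere (0 : E) 1 :=
    ⟨NormedSpace.normalize (f x), by simpa using hne x⟩
  have hg : Continuous g := by
    have hfc : Continuous fun x : geometricRealization L => f x :=
      f.continuous_of_finiteDimensional.comp continuous_subtype_val
    exact ((hfc.norm.inv₀ fun x => norm_ne_zero_iff.2 (hne x)).smul hfc).subtype_mk _
  have hinj : Injective g := by
    intro x y hxy
    have hray : SameRay ℝ (f x) (f y) :=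
      (sameRay_iff_inv_norm_smul_eq_of_ne (hne x) (hne y)).2 (congrArg Subtype.val hxy)
    obtain ⟨r, hr, hfxy⟩ := hray.exists_nonneg_right (hne y)
    have hxy : (x : κ → ℝ) = r • (y : κ → ℝ) :=
      hf.injOn (hcone x.2) (smul_mem_simplicialCone (hcone y.2) hr) (by rw [hfxy, map_smul])
    exact Subtype.ext (eq_of_mem_geometricRealization_of_eq_smul x.2 y.2 hxy)
  have hsurj : Surjective g := by
    intro e
    have he : ‖(e : E)‖ = 1 := norm_eq_of_mem_sphere e
    obtain ⟨x, hx, hxe⟩ := hf.surjOn (mem_univ (e : E))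
    have hx0 : x ≠ 0 := by
      rintro rfl
      simp [← hxe] at he
    obtain ⟨r, hr, hrx⟩ := exists_pos_smul_mem_geometricRealization hx hx0
    refine ⟨⟨r • x, hrx⟩, Subtype.ext ?_⟩
    calc NormedSpace.normalize (f (r • x)) = NormedSpace.normalize (e : E) := by
          rw [map_smul, hxe, NormedSpace.normalize_smul_of_pos hr]
      _ = e := NormedSpace.normalize_eq_self_of_norm_eq_one he
  have : CompactSpace (geometricRealization L) :=
    isCompact_iff_compactSpace.1 (isCompact_geometricRealization L)
  exact ⟨Continuous.homeoOfEquivCompactToT2 (f := Equiv.ofBijective g ⟨hinj, hsurj⟩) hg⟩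

end Fan

section Bier

theorem exists_surjective_ker_eq_span_singleton {𝕜 V W : Type*} [Field 𝕜] [AddCommGroup V]
    [Module 𝕜 V] [FiniteDimensional 𝕜 V] [AddCommGroup W] [Module 𝕜 W] [FiniteDimensional 𝕜 W]
    {v : V} (hv : v ≠ 0) (hdim : finrank 𝕜 W + 1 = finrank 𝕜 V) :
    ∃ φ : V →ₗ[𝕜] W, Surjective φ ∧ φ.ker = Submodule.span 𝕜 {v} := by
  have hquot : finrank 𝕜 (V ⧸ Submodule.span 𝕜 {v}) = finrank 𝕜 W := by
    have := Submodule.finrank_quotient_add_finrank (Submodule.span 𝕜 {v})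
    rw [finrank_span_singleton hv] at this
    lia
  let e := LinearEquiv.ofFinrankEq _ _ hquot
  exact ⟨e.toLinearMap ∘ₗ Submodule.mkQ _, e.surjective.comp (Submodule.mkQ_surjective _),
    by rw [LinearEquiv.ker_comp, Submodule.ker_mkQ]⟩

variable {ι : Type*}

/-- The Alexander dual of a simplicial complex `K`: the complements of its non-faces. -/
def alexanderDual (K : LowerSet (Set ι)) : LowerSet (Set ι) where
  carrier := {s | sᶜ ∉ K}
  lower' := fun _ _ hst hs ht => hs (K.lower (compl_subset_compl.2 hst) ht)

theorem mem_alexanderDual {K : LowerSet (Set ι)} {s : Set ι} : s ∈ alexanderDual K ↔ sᶜ ∉ K :=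
  Iff.rfl

/-- The Bier complex of `K`, i.e. the deleted join of `K` and its Alexander dual: the vertices
`(0, i)` carry the face of `K` and the vertices `(1, i)` the face of the dual. -/
def bierComplex (K : LowerSet (Set ι)) : LowerSet (Set (Fin 2 × ι)) where
  carrier := {S | Prod.mk 0 ⁻¹' S ∈ K ∧ Prod.mk 1 ⁻¹' S ∈ alexanderDual K ∧
    Disjoint (Prod.mk 0 ⁻¹' S) (Prod.mk 1 ⁻¹' S)}
  lower' := fun _ _ hTS hS =>
    ⟨K.lower (preimage_mono hTS) hS.1, (alexanderDual K).lower (preimage_mono hTS) hS.2.1,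
      hS.2.2.mono (preimage_mono hTS) (preimage_mono hTS)⟩

theorem mem_bierComplex {K : LowerSet (Set ι)} {S : Set (Fin 2 × ι)} :
    S ∈ bierComplex K ↔ Prod.mk 0 ⁻¹' S ∈ K ∧ Prod.mk 1 ⁻¹' S ∈ alexanderDual K ∧
      Disjoint (Prod.mk 0 ⁻¹' S) (Prod.mk 1 ⁻¹' S) :=
  Iff.rfl

section Threshold

variable {α : Type*} [LinearOrder α] {K : LowerSet (Set ι)}

theorem threshold_le_of_setOf_le_notMem {t : ι → α} {c d : α} (hc : {i | c < t i} ∈ K)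
    (hd : {i | d ≤ t i} ∉ K) : d ≤ c := by
  by_contra! hcd
  exact hd (K.lower (fun i hi => hcd.trans_le hi) hc)

theorem exists_mem_setOf_le_notMem [Finite ι] (hbot : K ≠ ⊥) (t : ι → α) {s : Set ι}
    (hs : s ∉ K) : ∃ j ∈ s, {i | t j ≤ t i} ∉ K := by
  have hne : s.Nonempty := by
    rw [nonempty_iff_ne_empty]
    rintro rfl
    obtain ⟨u, hu⟩ := LowerSet.coe_nonempty.2 hbot
    exact hs (K.lower (empty_subset u) hu)
  obtain ⟨j, hj, hmin⟩ := exists_min_image s t s.toFinite hne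
  exact ⟨j, hj, fun h => hs (K.lower hmin h)⟩

theorem existsUnique_threshold [Finite ι] (hbot : K ≠ ⊥) (htop : K ≠ ⊤) (t : ι → α) :
    ∃! c, {i | c < t i} ∈ K ∧ {i | c ≤ t i} ∉ K := by
  have huniv : univ ∉ K := fun h => htop (eq_top_iff.2 fun s _ => K.lower (subset_univ s) h)
  obtain ⟨j₀, -, hj₀⟩ := exists_mem_setOf_le_notMem hbot t huniv
  obtain ⟨j, hj, hmax⟩ := exists_max_image {j | {i | t j ≤ t i} ∉ K} t (toFinite _) ⟨j₀, hj₀⟩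
  have habove : {i | t j < t i} ∈ K := by
    by_contra h
    obtain ⟨k, hjk, hk⟩ := exists_mem_setOf_le_notMem hbot t h
    exact (hmax k hk).not_gt hjk
  exact ⟨t j, ⟨habove, hj⟩, fun c hc =>
    (threshold_le_of_setOf_le_notMem habove hc.2).antisymm
      (threshold_le_of_setOf_le_notMem hc.1 hj)⟩

end Threshold

/-- The linear map sending the vertex `(0, i)` to the basis vector `eᵢ` and `(1, i)` to `-eᵢ`. -/
def signedDiff : (Fin 2 × ι → ℝ) →ₗ[ℝ] (ι → ℝ) :=
  LinearMap.funLeft ℝ ℝ (Prod.mk 0) - LinearMap.funLeft ℝ ℝ (Prod.mk 1)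

/-- The section of `signedDiff` that puts the positive part of `t` on the vertices `(0, i)` and the
negative part on the vertices `(1, i)`. -/
def signedParts (t : ι → ℝ) : Fin 2 × ι → ℝ :=
  fun v => ![(t v.2)⁺, (t v.2)⁻] v.1

theorem signedDiff_signedParts (t : ι → ℝ) : signedDiff (signedParts t) = t := by
  ext i
  simp [signedDiff, signedParts, LinearMap.funLeft_apply]

theorem signedParts_signedDiff {K : LowerSet (Set ι)} {x : Fin 2 × ι → ℝ}
    (hx : x ∈ simplicialCone (bierComplex K)) : signedParts (signedDiff x) = x := by
  have hdisj (i : ι) : x (0, i) = 0 ∨ x (1, i) = 0 := by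
    by_contra! h
    exact disjoint_left.1 (mem_bierComplex.1 hx.2).2.2 h.1 h.2
  ext ⟨k, i⟩
  have h0 : 0 ≤ x (0, i) := hx.1 (0, i)
  have h1 : 0 ≤ x (1, i) := hx.1 (1, i)
  fin_cases k <;> rcases hdisj i with h | h <;>
    simp [signedParts, signedDiff, LinearMap.funLeft_apply, h, h0, h1]

theorem signedParts_mem_simplicialCone_iff {K : LowerSet (Set ι)} {t : ι → ℝ} :
    signedParts t ∈ simplicialCone (bierComplex K) ↔ {i | 0 < t i} ∈ K ∧ {i | 0 ≤ t i} ∉ K := by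
  have hpos : Prod.mk 0 ⁻¹' support (signedParts t) = {i | 0 < t i} := by
    ext i
    simp [signedParts]
  have hneg : Prod.mk 1 ⁻¹' support (signedParts t) = {i | 0 ≤ t i}ᶜ := by
    ext i
    simp [signedParts]
  have hnonneg : 0 ≤ signedParts t := by
    rintro ⟨k, i⟩
    fin_cases k <;> simp [signedParts, posPart_nonneg, negPart_nonneg]
  have hdisj : Disjoint {i | 0 < t i} {i | 0 ≤ t i}ᶜ :=
    disjoint_compl_right_iff_subset.2 fun i (hi : 0 < t i) => hi.le
  have hmem : support (signedParts t) ∈ bierComplex K ↔ {i | 0 < t i} ∈ K ∧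
      {i | 0 ≤ t i}ᶜ ∈ alexanderDual K ∧ Disjoint {i | 0 < t i} {i | 0 ≤ t i}ᶜ := by
    rw [← hpos, ← hneg]
    rfl
  have hdual : {i | 0 ≤ t i}ᶜ ∈ alexanderDual K ↔ {i | 0 ≤ t i} ∉ K := by
    rw [mem_alexanderDual, compl_compl]
  simp only [simplicialCone, mem_ofPred_eq, hnonneg, hmem, hdual, hdisj, true_and, and_true]

theorem bijOn_comp_signedDiff [Finite ι] {K : LowerSet (Set ι)} (hbot : K ≠ ⊥) (htop : K ≠ ⊤)
    {E : Type*} [AddCommGroup E] [Module ℝ E]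
    {φ : (ι → ℝ) →ₗ[ℝ] E} (hφ : Surjective φ) (hker : φ.ker = Submodule.span ℝ {1}) :
    BijOn (φ ∘ₗ signedDiff) (simplicialCone (bierComplex K)) univ := by
  refine ⟨mapsTo_univ _ _, fun x hx y hy hxy => ?_, fun e _ => ?_⟩
  · have hxK := signedParts_mem_simplicialCone_iff.1 ((signedParts_signedDiff hx).symm ▸ hx)
    have hyK := signedParts_mem_simplicialCone_iff.1 ((signedParts_signedDiff hy).symm ▸ hy)
    obtain ⟨a, ha⟩ : ∃ a : ℝ, a • 1 = signedDiff x - signedDiff y := by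
      rw [← Submodule.mem_span_singleton, ← hker, LinearMap.mem_ker, map_sub, sub_eq_zero]
      exact hxy
    have hshift (i : ι) : signedDiff x i = signedDiff y i + a := by
      have := congrFun ha i
      simp only [Pi.smul_apply, Pi.one_apply, smul_eq_mul, mul_one, Pi.sub_apply] at this
      linarith
    have ha0 : a = 0 := (existsUnique_threshold hbot htop (signedDiff x)).unique
      (by simpa [hshift] using hyK) hxK
    rw [← signedParts_signedDiff hx, ← signedParts_signedDiff hy]
    congr 1
    ext i
    simp [hshift, ha0]
  · obtain ⟨t, rfl⟩ := hφ e
    obtain ⟨c, hc, -⟩ := existsUnique_threshold hbot htop t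
    have hφ1 : φ 1 = 0 := by
      rw [← LinearMap.mem_ker, hker]
      exact Submodule.mem_span_singleton_self 1
    refine ⟨signedParts (t - c • 1), signedParts_mem_simplicialCone_iff.2 (by simpa using hc), ?_⟩
    simp [signedDiff_signedParts, hφ1]

theorem nonempty_bierComplex_homeomorph_sphere [Fintype ι] {K : LowerSet (Set ι)} (hbot : K ≠ ⊥)
    (htop : K ≠ ⊤) {E : Type*} [NormedAddCommGroup E] [NormedSpace ℝ E] [FiniteDimensional ℝ E]
    (hE : finrank ℝ E + 1 = Fintype.card ι) :
    Nonempty (geometricRealization (bierComplex K) ≃ₜ Metric.sphere (0 : E) 1) := by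
  have : Nonempty ι := Fintype.card_pos_iff.1 (by lia)
  obtain ⟨φ, hφ, hker⟩ : ∃ φ : (ι → ℝ) →ₗ[ℝ] E, Surjective φ ∧ φ.ker = Submodule.span ℝ {1} :=
    exists_surjective_ker_eq_span_singleton one_ne_zero (by simpa using hE)
  exact nonempty_geometricRealization_homeomorph_sphere _ (bijOn_comp_signedDiff hbot htop hφ hker)

theorem chessboard_is_two_sphere_general [Fintype ι] {K : LowerSet (Set ι)} (hbot : K ≠ ⊥)
    (htop : K ≠ ⊤) {E : Type*} [NormedAddCommGroup E] [NormedSpace ℝ E]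
    (hE : finrank ℝ E + 1 = Fintype.card ι) (hdim : 2 < finrank ℝ E) :
    Nonempty (geometricRealization (bierComplex K) ≃ₜ Metric.sphere (0 : E) 1) ∧
      SimplyConnectedSpace (geometricRealization (bierComplex K)) := by
  have : FiniteDimensional ℝ E := FiniteDimensional.of_finrank_pos (by lia)
  obtain ⟨e⟩ := nonempty_bierComplex_homeomorph_sphere hbot htop hE
  have := simplyConnectedSpace_sphere hdim
  exact ⟨⟨e⟩, e.toHomotopyEquiv.simplyConnectedSpace⟩

end Bier

section Chessboard

/-- The `(d - 1)`-skeleton of the full simplex on `ι`; the index `d` counts vertices rather than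
dimension. -/
def simplexSkeleton (ι : Type*) [Finite ι] (d : ℕ) : LowerSet (Set ι) where
  carrier := {s | s.ncard ≤ d}
  lower' := fun _ _ hts hs => (ncard_le_ncard hts).trans hs

theorem mem_simplexSkeleton {ι : Type*} [Finite ι] {d : ℕ} {s : Set ι} :
    s ∈ simplexSkeleton ι d ↔ s.ncard ≤ d :=
  Iff.rfl

theorem simplexSkeleton_ne_bot (ι : Type*) [Finite ι] (d : ℕ) : simplexSkeleton ι d ≠ ⊥ :=
  LowerSet.coe_nonempty.1 ⟨∅, by simp [mem_simplexSkeleton]⟩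

theorem simplexSkeleton_ne_top {ι : Type*} [Finite ι] {d : ℕ} (hd : d < Nat.card ι) :
    simplexSkeleton ι d ≠ ⊤ := by
  intro h
  have huniv : univ ∈ simplexSkeleton ι d := h ▸ LowerSet.mem_top
  rw [mem_simplexSkeleton, ncard_univ] at huniv
  lia

theorem alexanderDual_simplexSkeleton {ι : Type*} [Finite ι] {a b : ℕ}
    (hab : a + b + 1 = Nat.card ι) :
    alexanderDual (simplexSkeleton ι a) = simplexSkeleton ι b := by
  ext s
  have := ncard_add_ncard_compl s
  simp only [SetLike.mem_coe, mem_alexanderDual, mem_simplexSkeleton]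
  lia

theorem card_filter_fst_eq_ncard_preimage {α β : Type*} [DecidableEq α] (S : Finset (α × β))
    (a : α) : (S.filter fun c => c.1 = a).card = (Prod.mk a ⁻¹' (S : Set (α × β))).ncard := by
  have himage : (S.filter fun c => c.1 = a : Set (α × β)) =
      Prod.mk a '' (Prod.mk a ⁻¹' (S : Set (α × β))) := by
    ext ⟨b, j⟩
    simp only [Finset.coe_filter, mem_ofPred_eq, mem_image, mem_preimage, Finset.mem_coe,
      Prod.mk.injEq]
    constructor
    · rintro ⟨hmem, rfl⟩
      exact ⟨j, hmem, rfl, rfl⟩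
    · rintro ⟨_, hmem, rfl, rfl⟩
      exact ⟨hmem, rfl⟩
  rw [← ncard_coe_finset, himage, ncard_image_of_injective _ (Prod.mk_right_injective a)]

theorem forall_card_filter_snd_le_one_iff_disjoint {β : Type*} [DecidableEq β]
    (S : Finset (Fin 2 × β)) :
    (∀ j, (S.filter fun c => c.2 = j).card ≤ 1) ↔
      Disjoint (Prod.mk 0 ⁻¹' (S : Set (Fin 2 × β))) (Prod.mk 1 ⁻¹' (S : Set (Fin 2 × β))) := by
  simp only [Finset.card_le_one, disjoint_left, mem_preimage, Finset.mem_coe, Finset.mem_filter]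
  constructor
  · intro h j h0 h1
    simpa using h j (0, j) ⟨h0, rfl⟩ (1, j) ⟨h1, rfl⟩
  · rintro h j ⟨k, _⟩ ⟨hk, rfl⟩ ⟨l, _⟩ ⟨hl, rfl⟩
    fin_cases k <;> fin_cases l <;> simp_all

theorem isChessSimplex_iff_mem_bierComplex (S : Finset (Fin 2 × Fin 4)) :
    IsChessSimplex S ↔ (S : Set (Fin 2 × Fin 4)) ∈ bierComplex (simplexSkeleton (Fin 4) 2) := by
  have hdual : alexanderDual (simplexSkeleton (Fin 4) 2) = simplexSkeleton (Fin 4) 1 :=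
    alexanderDual_simplexSkeleton (by simp)
  rw [IsChessSimplex, forall_card_filter_snd_le_one_iff_disjoint,
    card_filter_fst_eq_ncard_preimage, card_filter_fst_eq_ncard_preimage, mem_bierComplex, hdual,
    mem_simplexSkeleton, mem_simplexSkeleton]
  tauto

theorem chessRealization_eq_geometricRealization_bierComplex :
    chessRealization = geometricRealization (bierComplex (simplexSkeleton (Fin 4) 2)) := by
  ext x
  simp [chessRealization, geometricRealization, isChessSimplex_iff_mem_bierComplex,
    Function.support]

end Chessboard

/-- **Lemma 2.4** (`lema:small-Bier`): the multiple chessboard complex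
`Δ_{2,4}^{𝟙;𝕃}` is a triangulation of the `2`-sphere: its geometric realization is
homeomorphic to `S²`; in particular it is a closed `2`-manifold and simply connected. -/
theorem chessboard_is_two_sphere :
    Nonempty (chessRealization ≃ₜ Metric.sphere (0 : EuclideanSpace ℝ (Fin 3)) 1) ∧
    SimplyConnectedSpace chessRealization := by
  rw [chessRealization_eq_geometricRealization_bierComplex]
  exact chessboard_is_two_sphere_general (simplexSkeleton_ne_bot _ _)
    (simplexSkeleton_ne_top (by simp)) (by simp) (by simp)
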